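/- Let 𝒜 = ((a_{N,n})_{N∈ℕ})_{n∈ℕ} be a double sequence of weights on 𝔻 with a_{N,n+1} ≤ a_{N,n} ≤ a_{N+1,n} pointwise, satisfying conditions (LOG) and (Σ), and assume every weight a_{N,n} is essential. Then 𝒜 satisfies condition (Q) if and only if 𝒜 satisfies condition (wQ). -/

import Mathlib

noncomputable section

open Complex

/-- The open unit disc in ℂ. -/
def uD : Set ℂ := {z : ℂ | ‖z‖ < 1}

/-- Holomorphic on the unit disc. -/
def Holo (f : ℂ → ℂ) : Prop := DifferentiableOn ℂ f uD

/-- A weight on 𝔻: continuous and strictly positive. -/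
def IsWeight (v : ℂ → ℝ) : Prop :=
  ContinuousOn v uD ∧ ∀ z ∈ uD, 0 < v z

/-- Radial weight. -/
def Radial (v : ℂ → ℝ) : Prop :=
  ∀ z ∈ uD, ∀ w ∈ uD, ‖z‖ = ‖w‖ → v z = v w

/-- Non-increasing in the modulus. -/
def NonInc (v : ℂ → ℝ) : Prop :=
  ∀ z ∈ uD, ∀ w ∈ uD, ‖z‖ ≤ ‖w‖ → v w ≤ v z

/-- r₀ = 0, r_κ = 1 - 2^(-2^κ) for κ ≥ 1. -/
def rseq (κ : ℕ) : ℝ := if κ = 0 then 0 else 1 - 1 / 2 ^ (2 ^ κ)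

/-- Condition (LOG 1) for a single radial weight. -/
def Log1 (A : ℝ) (v : ℂ → ℝ) : Prop :=
  ∀ κ : ℕ, v (rseq κ : ℂ) ≤ A * v (rseq (κ + 1) : ℂ)

/-- Condition (LOG 2) for a single radial weight. -/
def Log2 (a : ℝ) (v : ℂ → ℝ) : Prop :=
  ∀ κ : ℕ, v (rseq (κ + 1) : ℂ) ≤ a * v (rseq κ : ℂ)

/-- The weight tends to 0 as |z| → 1. -/
def VanishAtOne (v : ℂ → ℝ) : Prop :=
  ∀ ε > 0, ∃ r : ℝ, r < 1 ∧ ∀ z ∈ uD, r ≤ ‖z‖ → v z ≤ ε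

/-- Associated growth function w~ of a growth condition w. -/
def growthTilde (w : ℂ → ℝ) (z : ℂ) : ℝ :=
  sSup {t : ℝ | ∃ g : ℂ → ℂ, Holo g ∧ (∀ x ∈ uD, ‖g x‖ ≤ w x) ∧ t = ‖g z‖}

/-- Associated weight ṽ = 1/(1/v)~. -/
def assocWeight (v : ℂ → ℝ) (z : ℂ) : ℝ := (growthTilde (fun x => 1 / v x) z)⁻¹

/-- Monotonicity of the double sequence: decreasing in n, increasing in N. -/
def MonoSeq (a : ℕ → ℕ → ℂ → ℝ) : Prop :=
  ∀ N n, ∀ z ∈ uD, a N (n + 1) z ≤ a N n z ∧ a N n z ≤ a (N + 1) n z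

/-- Condition (LOG) for a double sequence with constants 0 < a < 1 < A. -/
def SeqLOG (aa A : ℝ) (a : ℕ → ℕ → ℂ → ℝ) : Prop :=
  ∀ N n, Radial (a N n) ∧ NonInc (a N n) ∧ VanishAtOne (a N n) ∧
    Log1 A (a N n) ∧ Log2 aa (a N n)

/-- Condition (Q). -/
def CondQ (a : ℕ → ℕ → ℂ → ℝ) : Prop :=
  ∀ N, ∃ M ≥ N, ∃ n, ∀ K ≥ M, ∀ m, ∀ ε > 0, ∃ k, ∃ S > 0,
    ∀ z ∈ uD, 1 / a M m z ≤ max (ε / a N n z) (S / a K k z)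

/-- Condition (wQ). -/
def CondwQ (a : ℕ → ℕ → ℂ → ℝ) : Prop :=
  ∀ N, ∃ M ≥ N, ∃ n, ∀ K ≥ M, ∀ m, ∃ k, ∃ S > 0,
    ∀ z ∈ uD, 1 / a M m z ≤ max (S / a N n z) (S / a K k z)

/-- Condition (Q)~. -/
def CondQTilde (a : ℕ → ℕ → ℂ → ℝ) : Prop :=
  ∀ N, ∃ M ≥ N, ∃ n, ∀ K ≥ M, ∀ m, ∀ ε > 0, ∃ k, ∃ S > 0,
    ∀ z ∈ uD, growthTilde (fun x => 1 / a M m x) z ≤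
      growthTilde (fun x => max (ε / a N n x) (S / a K k x)) z

/-- Pointwise maximum max_{N=1,…,L} a_{N,n(N)}. -/
def finMax (a : ℕ → ℕ → ℂ → ℝ) (nn : ℕ → ℕ) (L : ℕ) (z : ℂ) : ℝ :=
  sSup {t : ℝ | ∃ N, 1 ≤ N ∧ N ≤ L ∧ t = a N (nn N) z}

/-- Condition (B). -/
def CondB (a : ℕ → ℕ → ℂ → ℝ) : Prop :=
  ∀ nn : ℕ → ℕ, ∃ m, ∀ M, ∃ L, 1 ≤ L ∧ ∃ c > 0,
    ∀ z ∈ uD, a M m z ≤ c * finMax a nn L z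

/-- Condition (B)~. -/
def CondBTilde (a : ℕ → ℕ → ℂ → ℝ) : Prop :=
  ∀ nn : ℕ → ℕ, ∃ m, ∀ M, ∃ L, 1 ≤ L ∧ ∃ c > 0,
    ∀ z ∈ uD, assocWeight (a M m) z ≤ c * assocWeight (finMax a nn L) z

/-- A weight is essential. -/
def Essential (v : ℂ → ℝ) : Prop :=
  ∃ C > 0, ∀ z ∈ uD,
    growthTilde (fun x => 1 / v x) z ≤ 1 / v z ∧
    1 / v z ≤ C * growthTilde (fun x => 1 / v x) z

/-- Condition (Σ). -/
def CondSigma (a : ℕ → ℕ → ℂ → ℝ) : Prop :=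
  ∀ N, ∃ K ≥ N, ∀ k, ∃ n ≥ k, ∀ ε > 0, ∃ Q : Set ℂ,
    IsCompact Q ∧ Q ⊆ uD ∧ ∀ z ∈ uD \ Q, a N n z / a K k z ≤ ε

/-- The Banach space Ha(𝔻) as a set of functions. -/
def HaSet (v : ℂ → ℝ) : Set (ℂ → ℂ) :=
  {f | Holo f ∧ ∃ C : ℝ, ∀ z ∈ uD, v z * ‖f z‖ ≤ C}

/-!
To pass from (wQ) to (Q), let `L` be the index that (Σ) provides for `N`, apply (wQ) to `L`, which
yields a bound `max (S / a_{L,l}) (S / a_{K,k})`, and choose `n` by (Σ) for `l`. Off a compact set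
`a_{N,n} / a_{L,l} ≤ ε / S`, so that `S / a_{L,l} ≤ ε / a_{N,n}`. On the compact set all weights are
comparable, so it suffices to enlarge the constant in front of `1 / a_{K,k}`.
-/

section Absorption

variable {X : Type*} [TopologicalSpace X]

/-- `f` vanishes at infinity on `U`, for nonnegative `f`: as in `CondSigma`, only an upper bound is
required outside compact subsets of `U`. -/
def VanishesAtInfinityOn (f : X → ℝ) (U : Set X) : Prop :=
  ∀ ε > 0, ∃ Q : Set X, IsCompact Q ∧ Q ⊆ U ∧ ∀ x ∈ U \ Q, f x ≤ ε

theorem exists_one_div_le_div_of_isCompact {Q : Set X} {u w : X → ℝ} (hQ : IsCompact Q)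
    (hu : ContinuousOn u Q) (hw : ContinuousOn w Q)
    (hu_pos : ∀ x ∈ Q, 0 < u x) (hw_pos : ∀ x ∈ Q, 0 < w x) :
    ∃ C, ∀ x ∈ Q, 1 / u x ≤ C / w x := by
  obtain ⟨C, hC⟩ := hQ.bddAbove_image (hw.div hu fun x hx => (hu_pos x hx).ne')
  refine ⟨C, fun x hx => ?_⟩
  rw [le_div_iff₀ (hw_pos x hx), one_div_mul_eq_div]
  exact hC (Set.mem_image_of_mem _ hx)

theorem exists_one_div_le_max_of_vanishesAtInfinityOn {U : Set X} {u v w b : X → ℝ} {S ε : ℝ}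
    (hu : ContinuousOn u U) (hw : ContinuousOn w U)
    (hu_pos : ∀ x ∈ U, 0 < u x) (hv_pos : ∀ x ∈ U, 0 < v x)
    (hw_pos : ∀ x ∈ U, 0 < w x) (hb_pos : ∀ x ∈ U, 0 < b x)
    (hbv : VanishesAtInfinityOn (fun x => b x / v x) U) (hS : 0 < S) (hε : 0 < ε)
    (h : ∀ x ∈ U, 1 / u x ≤ max (S / v x) (S / w x)) :
    ∃ T > 0, ∀ x ∈ U, 1 / u x ≤ max (ε / b x) (T / w x) := by
  obtain ⟨Q, hQ, hQU, hbv_le⟩ := hbv (ε / S) (div_pos hε hS)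
  obtain ⟨C, hC⟩ := exists_one_div_le_div_of_isCompact hQ (hu.mono hQU) (hw.mono hQU)
    (fun x hx => hu_pos x (hQU hx)) (fun x hx => hw_pos x (hQU hx))
  refine ⟨max S C, lt_max_of_lt_left hS, fun x hx => ?_⟩
  by_cases hxQ : x ∈ Q
  · calc 1 / u x ≤ C / w x := hC x hxQ
      _ ≤ max S C / w x := div_le_div_of_nonneg_right (le_max_right S C) (hw_pos x hx).le
      _ ≤ max (ε / b x) (max S C / w x) := le_max_right _ _
  · have h_absorb : S / v x ≤ ε / b x := by
      have := hbv_le x ⟨hx, hxQ⟩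
      rw [div_le_div_iff₀ (hv_pos x hx) hS] at this
      rwa [div_le_div_iff₀ (hv_pos x hx) (hb_pos x hx), mul_comm S]
    calc 1 / u x ≤ max (S / v x) (S / w x) := h x hx
      _ ≤ max (ε / b x) (max S C / w x) := max_le_max h_absorb
        (div_le_div_of_nonneg_right (le_max_left S C) (hw_pos x hx).le)

end Absorption

theorem CondQ.condwQ {a : ℕ → ℕ → ℂ → ℝ} (ha : ∀ N n, ∀ z ∈ uD, 0 < a N n z) (hQ : CondQ a) :
    CondwQ a := by
  intro N
  obtain ⟨M, hNM, n, hM⟩ := hQ N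
  refine ⟨M, hNM, n, fun K hMK m => ?_⟩
  obtain ⟨k, S, -, hS⟩ := hM K hMK m 1 one_pos
  refine ⟨k, max 1 S, lt_max_of_lt_left one_pos, fun z hz => (hS z hz).trans (max_le_max ?_ ?_)⟩
  · exact div_le_div_of_nonneg_right (le_max_left 1 S) (ha N n z hz).le
  · exact div_le_div_of_nonneg_right (le_max_right 1 S) (ha K k z hz).le

theorem CondwQ.condQ {a : ℕ → ℕ → ℂ → ℝ} (hW : ∀ N n, IsWeight (a N n)) (hSigma : CondSigma a)
    (hwQ : CondwQ a) : CondQ a := by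
  intro N
  obtain ⟨L, hNL, hL⟩ := hSigma N
  obtain ⟨M, hLM, l, hM⟩ := hwQ L
  obtain ⟨n, -, h_vanish⟩ := hL l
  refine ⟨M, hNL.trans hLM, n, fun K hMK m ε hε => ?_⟩
  obtain ⟨k, S, hS_pos, hS⟩ := hM K hMK m
  exact ⟨k, exists_one_div_le_max_of_vanishesAtInfinityOn (hW M m).1 (hW K k).1 (hW M m).2
    (hW L l).2 (hW K k).2 (hW N n).2 h_vanish hS_pos hε hS⟩

theorem condQ_iff_condwQ_essential_general {a : ℕ → ℕ → ℂ → ℝ}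
    (hW : ∀ N n, IsWeight (a N n)) (hSigma : CondSigma a) : CondQ a ↔ CondwQ a :=
  ⟨CondQ.condwQ fun N n => (hW N n).2, CondwQ.condQ hW hSigma⟩

/-- under (LOG) and (Σ) with all weights essential, (Q) ⟺ (wQ). -/
theorem condQ_iff_condwQ_essential (a' A : ℝ) (ha0 : 0 < a') (ha1 : a' < 1) (hA : 1 < A)
    (a : ℕ → ℕ → ℂ → ℝ)
    (hW : ∀ N n, IsWeight (a N n)) (hMono : MonoSeq a)
    (hLOG : SeqLOG a' A a) (hSigma : CondSigma a)
    (hEss : ∀ N n, Essential (a N n)) :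
    CondQ a ↔ CondwQ a :=
  condQ_iff_condwQ_essential_general hW hSigma
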